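/- For every g ≥ 5, the block-inclusion homomorphism O_{g,g}(ℤ) → O_{g+1,g+1}(ℤ), given by extending a matrix by the identity on one additional hyperbolic plane, induces an isomorphism on abelianisations. -/

import Mathlib

open Matrix

/-- Index type for `2g × 2g` matrices: the first `g` indices correspond to the
basis vectors `e₁, …, e_g` and the last `g` to `f₁, …, f_g`. -/
abbrev HypIdx (g : ℕ) := Fin g ⊕ Fin g

/-- Gram matrix of the orthogonal sum of `g` hyperbolic planes. -/
def Qmat (g : ℕ) : Matrix (HypIdx g) (HypIdx g) ℤ := Matrix.fromBlocks 0 1 1 0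

/-- The standard symplectic form matrix. -/
def Jmat (g : ℕ) : Matrix (HypIdx g) (HypIdx g) ℤ := Matrix.fromBlocks 0 1 (-1) 0

/-- The subgroup of `GL_{2g}(ℤ)` of matrices `A` with `Aᵀ * Q * A = Q`. -/
def formGroup (g : ℕ) (Q : Matrix (HypIdx g) (HypIdx g) ℤ) :
    Subgroup (GL (HypIdx g) ℤ) where
  carrier := {A | A.valᵀ * Q * A.val = Q}
  one_mem' := by simp
  mul_mem' := by
    intro A B hA hB
    have hA' : A.valᵀ * Q * A.val = Q := hA
    have hB' : B.valᵀ * Q * B.val = Q := hB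
    show (A * B).valᵀ * Q * (A * B).val = Q
    rw [Units.val_mul, transpose_mul]
    calc B.valᵀ * A.valᵀ * Q * (A.val * B.val)
        = B.valᵀ * (A.valᵀ * Q * A.val) * B.val := by noncomm_ring
      _ = B.valᵀ * Q * B.val := by rw [hA']
      _ = Q := hB'
  inv_mem' := by
    intro A hA
    have hA' : A.valᵀ * Q * A.val = Q := hA
    show (A⁻¹).valᵀ * Q * (A⁻¹).val = Q
    have h1 : A.val * (A⁻¹).val = 1 := by
      rw [← Units.val_mul, mul_inv_cancel, Units.val_one]
    calc (A⁻¹).valᵀ * Q * (A⁻¹).val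
        = (A⁻¹).valᵀ * (A.valᵀ * Q * A.val) * (A⁻¹).val := by rw [hA']
      _ = (A.val * (A⁻¹).val)ᵀ * Q * (A.val * (A⁻¹).val) := by
          rw [transpose_mul]; noncomm_ring
      _ = Q := by rw [h1]; simp

/-- `O_{g,g}(ℤ)`. -/
def Ogg (g : ℕ) : Subgroup (GL (HypIdx g) ℤ) := formGroup g (Qmat g)

/-- `Sp_{2g}(ℤ)`. -/
def Sp (g : ℕ) : Subgroup (GL (HypIdx g) ℤ) := formGroup g (Jmat g)

/-- The standard quadratic refinement `q(x, y) = Σᵢ xᵢ yᵢ mod 2`. -/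
def qform (g : ℕ) (v : HypIdx g → ℤ) : ZMod 2 :=
  ∑ i : Fin g, ((v (Sum.inl i) * v (Sum.inr i) : ℤ) : ZMod 2)

/-- The subgroup of `GL_{2g}(ℤ)` preserving the quadratic refinement `q`. -/
def qPreserving (g : ℕ) : Subgroup (GL (HypIdx g) ℤ) where
  carrier := {A | ∀ v : HypIdx g → ℤ, qform g (A.val.mulVec v) = qform g v}
  one_mem' := by intro v; simp
  mul_mem' := by
    intro A B hA hB v
    show qform g ((A * B).val.mulVec v) = qform g v
    rw [Units.val_mul, ← Matrix.mulVec_mulVec, hA, hB]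
  inv_mem' := by
    intro A hA v
    have h1 : A.val.mulVec ((A⁻¹).val.mulVec v) = v := by
      rw [Matrix.mulVec_mulVec, ← Units.val_mul, mul_inv_cancel, Units.val_one,
        Matrix.one_mulVec]
    calc qform g ((A⁻¹).val.mulVec v)
        = qform g (A.val.mulVec ((A⁻¹).val.mulVec v)) := (hA _).symm
      _ = qform g v := by rw [h1]

/-- `Sp^q_{2g}(ℤ)`: symplectic matrices preserving the quadratic refinement. -/
def Spq (g : ℕ) : Subgroup (GL (HypIdx g) ℤ) := Sp g ⊓ qPreserving g
/-- Extension of a `2g × 2g` matrix to a `2(g+1) × 2(g+1)` matrix, acting as the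
original matrix on the first `g` hyperbolic/symplectic basis pairs and as the
identity on the additional pair. -/
def extendMat {g : ℕ} (A : Matrix (HypIdx g) (HypIdx g) ℤ) :
    Matrix (HypIdx (g + 1)) (HypIdx (g + 1)) ℤ := fun i j =>
  match i, j with
  | Sum.inl a, Sum.inl b =>
      if h : a.val < g ∧ b.val < g then A (Sum.inl ⟨a.val, h.1⟩) (Sum.inl ⟨b.val, h.2⟩)
      else if a = b then 1 else 0
  | Sum.inl a, Sum.inr b =>
      if h : a.val < g ∧ b.val < g then A (Sum.inl ⟨a.val, h.1⟩) (Sum.inr ⟨b.val, h.2⟩) else 0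
  | Sum.inr a, Sum.inl b =>
      if h : a.val < g ∧ b.val < g then A (Sum.inr ⟨a.val, h.1⟩) (Sum.inl ⟨b.val, h.2⟩) else 0
  | Sum.inr a, Sum.inr b =>
      if h : a.val < g ∧ b.val < g then A (Sum.inr ⟨a.val, h.1⟩) (Sum.inr ⟨b.val, h.2⟩)
      else if a = b then 1 else 0


set_option linter.unusedSimpArgs false

namespace OggAux

open scoped commutatorElement

lemma Q_apply (n : ℕ) (c d : HypIdx n) : Qmat n c d = if d = c.swap then 1 else 0 := by
  rcases c with c | c <;> rcases d with d | d <;> simp [Qmat, Matrix.one_apply, eq_comm]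

lemma single_mul_Q {n : ℕ} (a b : HypIdx n) (t : ℤ) :
    Matrix.single a b t * Qmat n = Matrix.single a b.swap t := by
  ext i j
  by_cases h : i = a
  · subst h
    by_cases h2 : j = b.swap
    · subst h2; simp [Q_apply]
    · have h3 : b.swap ≠ j := fun h => h2 h.symm
      simp [Q_apply, h2, Matrix.single_apply, h3]
  · have h' : a ≠ i := fun h' => h h'.symm
    simp [h, Matrix.single_apply, h']

lemma Q_mul_single {n : ℕ} (a b : HypIdx n) (t : ℤ) :
    Qmat n * Matrix.single a b t = Matrix.single a.swap b t := by
  ext i j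
  by_cases h : j = b
  · subst h
    by_cases h2 : i = a.swap
    · subst h2; simp [Q_apply]
    · have h3 : a.swap ≠ i := fun h => h2 h.symm
      have h4 : a ≠ i.swap := fun h => h3 (by rw [h, Sum.swap_swap])
      simp [Q_apply, h4, Matrix.single_apply, h3]
  · have h' : b ≠ j := fun h' => h h'.symm
    simp [h, Matrix.single_apply, h']

lemma Q_mul_Q (n : ℕ) : Qmat n * Qmat n = 1 := by
  simp [Qmat, Matrix.fromBlocks_multiply]

/-- Build an element of `O_{n,n}`. -/
def mkO {n : ℕ} (A : Matrix (HypIdx n) (HypIdx n) ℤ) (h : Aᵀ * Qmat n * A = Qmat n) :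
    Ogg n :=
  have h1 : (Qmat n * Aᵀ * Qmat n) * A = 1 := by
    rw [Matrix.mul_assoc (Qmat n), Matrix.mul_assoc (Qmat n), h, Q_mul_Q]
  ⟨⟨A, Qmat n * Aᵀ * Qmat n, mul_eq_one_comm.mp h1, h1⟩, h⟩

@[simp] lemma mkO_val {n : ℕ} (A : Matrix (HypIdx n) (HypIdx n) ℤ)
    (h : Aᵀ * Qmat n * A = Qmat n) : (mkO A h).val.val = A := rfl

lemma O_ext {n : ℕ} {A B : Ogg n} (h : A.val.val = B.val.val) : A = B :=
  Subtype.ext (Units.ext h)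

lemma O_form {n : ℕ} (A : Ogg n) : A.val.valᵀ * Qmat n * A.val.val = Qmat n := A.2

/-- elementary matrix -/
def Tm {n : ℕ} (a b : HypIdx n) (t : ℤ) : Matrix (HypIdx n) (HypIdx n) ℤ :=
  1 + Matrix.single a b t - Matrix.single b.swap a.swap t

lemma swap_ne {n : ℕ} (a : HypIdx n) : a.swap ≠ a := by
  rcases a with a | a <;> simp

lemma Tm_form {n : ℕ} (a b : HypIdx n) (t : ℤ) (h1 : b ≠ a) :
    (Tm a b t)ᵀ * Qmat n * Tm a b t = Qmat n := by
  have e1 := swap_ne a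
  have e2 := swap_ne b
  have h1' := h1.symm
  have e2' := e2.symm
  have e4 : a.swap ≠ b.swap := fun h => h1 (by simpa using (congrArg Sum.swap h).symm)
  simp only [Tm, transpose_sub, transpose_add, transpose_one, transpose_single, Matrix.sub_mul,
    Matrix.add_mul, Matrix.one_mul, single_mul_Q, Matrix.mul_sub, Matrix.mul_add, Matrix.mul_one,
    Q_mul_single, Sum.swap_swap]
  rw [Matrix.single_mul_single_of_ne _ _ _ _ e1, Matrix.single_mul_single_of_ne _ _ _ _ e4,
    Matrix.single_mul_single_of_ne _ _ _ _ h1, Matrix.single_mul_single_of_ne _ _ _ _ e2']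
  abel

def T {n : ℕ} (a b : HypIdx n) (t : ℤ) (h1 : b ≠ a) : Ogg n := mkO (Tm a b t) (Tm_form a b t h1)

lemma Tm_comm {n : ℕ} (a b c : HypIdx n) (t : ℤ) (h1 : b ≠ a) (h2 : b ≠ a.swap)
    (h3 : c ≠ b) (h4 : c ≠ b.swap) (h5 : c ≠ a) (h6 : c ≠ a.swap) :
    Tm a b t * Tm b c 1 = Tm a c t * Tm b c 1 * Tm a b t := by
  have sw : ∀ x y : HypIdx n, x.swap = y ↔ x = y.swap := fun x y =>
    ⟨fun h => by rw [← h, Sum.swap_swap], fun h => by rw [h, Sum.swap_swap]⟩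
  have sa := swap_ne a
  have sb := swap_ne b
  have sc := swap_ne c
  have h1' := h1.symm
  have h2' := h2.symm
  have h3' := h3.symm
  have h4' := h4.symm
  have h5' := h5.symm
  have h6' := h6.symm
  have k1 : ∀ {x y : HypIdx n}, x ≠ y → x.swap ≠ y.swap := fun h h' => h (by
    simpa using congrArg Sum.swap h')
  have k2 : ∀ {x y : HypIdx n}, x ≠ y.swap → x.swap ≠ y := fun h h' => h ((sw _ _).1 h')
  have k3 : b ≠ c.swap := (k2 h4).symm
  simp only [Tm, Matrix.sub_mul, Matrix.add_mul, Matrix.one_mul, Matrix.mul_sub, Matrix.mul_add,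
    Matrix.mul_one]
  simp only [Matrix.single_mul_single_same, Matrix.zero_mul,
    Matrix.single_mul_single_of_ne _ _ _ _ h1, Matrix.single_mul_single_of_ne _ _ _ _ h2,
    Matrix.single_mul_single_of_ne _ _ _ _ h3, Matrix.single_mul_single_of_ne _ _ _ _ h4,
    Matrix.single_mul_single_of_ne _ _ _ _ h5, Matrix.single_mul_single_of_ne _ _ _ _ h6,
    Matrix.single_mul_single_of_ne _ _ _ _ h1', Matrix.single_mul_single_of_ne _ _ _ _ h2',
    Matrix.single_mul_single_of_ne _ _ _ _ h3', Matrix.single_mul_single_of_ne _ _ _ _ h4',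
    Matrix.single_mul_single_of_ne _ _ _ _ h5', Matrix.single_mul_single_of_ne _ _ _ _ h6',
    Matrix.single_mul_single_of_ne _ _ _ _ (k1 h1), Matrix.single_mul_single_of_ne _ _ _ _ (k1 h3),
    Matrix.single_mul_single_of_ne _ _ _ _ (k1 h5), Matrix.single_mul_single_of_ne _ _ _ _ (k1 h1'),
    Matrix.single_mul_single_of_ne _ _ _ _ (k1 h3'), Matrix.single_mul_single_of_ne _ _ _ _ (k1 h5'),
    Matrix.single_mul_single_of_ne _ _ _ _ (k2 h2), Matrix.single_mul_single_of_ne _ _ _ _ (k2 h4),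
    Matrix.single_mul_single_of_ne _ _ _ _ (k2 h6), Matrix.single_mul_single_of_ne _ _ _ _ (k2 h4).symm,
    Matrix.single_mul_single_of_ne _ _ _ _ k3,
    Matrix.single_mul_single_of_ne _ _ _ _ sa, Matrix.single_mul_single_of_ne _ _ _ _ sb,
    Matrix.single_mul_single_of_ne _ _ _ _ sc, Matrix.single_mul_single_of_ne _ _ _ _ sa.symm,
    Matrix.single_mul_single_of_ne _ _ _ _ sb.symm, Matrix.single_mul_single_of_ne _ _ _ _ sc.symm,
    mul_one, one_mul]
  abel

/-- elementary subgroup -/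
def El (n : ℕ) : Subgroup (Ogg n) :=
  Subgroup.closure {X | ∃ a b t, ∃ h1 : b ≠ a, b ≠ a.swap ∧ X = T a b t h1}

lemma T_mem {n : ℕ} (a b : HypIdx n) (t : ℤ) (h1 : b ≠ a) (h2 : b ≠ a.swap) :
    T a b t h1 ∈ El n := Subgroup.subset_closure ⟨a, b, t, h1, h2, rfl⟩

lemma exists_third {n : ℕ} (hn : 3 ≤ n) (a b : HypIdx n) :
    ∃ c : HypIdx n, c ≠ a ∧ c ≠ a.swap ∧ c ≠ b ∧ c ≠ b.swap := by
  have key : ∀ i j : Fin n, ∃ k : Fin n, k ≠ i ∧ k ≠ j := by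
    intro i j
    have : ({i, j} : Finset (Fin n)).card < (Finset.univ : Finset (Fin n)).card := by
      have := Finset.card_le_two (a := i) (b := j)
      simp; omega
    obtain ⟨k, -, hk⟩ := Finset.exists_mem_notMem_of_card_lt_card this
    exact ⟨k, by simpa using hk⟩
  rcases a with a | a <;> rcases b with b | b <;> obtain ⟨k, h1, h2⟩ := key a b <;>
    exact ⟨Sum.inl k, by simp [h1, h2]⟩

lemma El_le_comm {n : ℕ} (hn : 3 ≤ n) : El n ≤ commutator (Ogg n) := by
  rw [El, Subgroup.closure_le]
  rintro X ⟨a, c, t, h1, h2, rfl⟩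
  obtain ⟨b, b1, b2, b3, b4⟩ := exists_third hn a c
  have b4' : c ≠ b.swap := fun h => b4 (by rw [h, Sum.swap_swap])
  have : T a b t b1 * T b c 1 b3.symm = T a c t h1 * T b c 1 b3.symm * T a b t b1 := by
    apply O_ext
    exact Tm_comm a b c t b1 b2 b3.symm b4' h1 h2
  have h : T a c t h1 = ⁅T a b t b1, T b c 1 b3.symm⁆ := by
    rw [commutatorElement_def, this]; group
  rw [h]
  exact Subgroup.commutator_mem_commutator (Subgroup.mem_top _) (Subgroup.mem_top _)

/-- action on vectors -/
lemma T_act {n : ℕ} (a b : HypIdx n) (t : ℤ) (h1 : b ≠ a) (v : HypIdx n → ℤ) (c : HypIdx n) :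
    ((T a b t h1).val.val *ᵥ v) c =
      v c + (if c = a then t * v b else 0) - (if c = b.swap then t * v a.swap else 0) := by
  simp only [T, mkO_val, Tm, Matrix.sub_mulVec, Matrix.add_mulVec, Matrix.one_mulVec,
    Pi.sub_apply, Pi.add_apply, Matrix.single_mulVec, Function.update_apply, Pi.zero_apply]

lemma act_mul {n : ℕ} (A B : Ogg n) (v : HypIdx n → ℤ) :
    (A * B).val.val *ᵥ v = A.val.val *ᵥ (B.val.val *ᵥ v) := by
  simp [Matrix.mulVec_mulVec]

lemma act_one {n : ℕ} (v : HypIdx n → ℤ) : (1 : Ogg n).val.val *ᵥ v = v := by simp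

/-- bilinear form -/
def Bf {n : ℕ} (v w : HypIdx n → ℤ) : ℤ := v ⬝ᵥ (Qmat n *ᵥ w)

lemma Bf_eq {n : ℕ} (v w : HypIdx n → ℤ) : Bf v w = ∑ c, v c * w c.swap := by
  simp [Bf, dotProduct, Matrix.mulVec, Q_apply]

lemma Bf_single {n : ℕ} (v : HypIdx n → ℤ) (p : HypIdx n) :
    Bf v (Pi.single p 1) = v p.swap := by
  rw [Bf_eq, Finset.sum_eq_single p.swap]
  · simp
  · intro c _ hc
    rw [Pi.single_eq_of_ne, mul_zero]
    exact fun h => hc (by rw [← h, Sum.swap_swap])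
  · simp

lemma Bf_act {n : ℕ} (A : Ogg n) (v w : HypIdx n → ℤ) :
    Bf (A.val.val *ᵥ v) (A.val.val *ᵥ w) = Bf v w := by
  unfold Bf
  conv_rhs => rw [← O_form A]
  rw [← Matrix.mulVec_mulVec, ← Matrix.mulVec_mulVec, Matrix.dotProduct_mulVec v,
    Matrix.vecMul_transpose]

lemma euclid {n : ℕ} (k : ℕ) : ∀ (a b : HypIdx n) (v : HypIdx n → ℤ), b ≠ a → b ≠ a.swap →
    (v a).natAbs + (v b).natAbs ≤ k →
    ∃ E ∈ El n, ((E.val.val *ᵥ v) a = 0 ∨ (E.val.val *ᵥ v) b = 0) ∧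
      (∀ c, c ≠ a → c ≠ b → c ≠ a.swap → c ≠ b.swap → (E.val.val *ᵥ v) c = v c) ∧
      (v a.swap = 0 → v b.swap = 0 →
        (E.val.val *ᵥ v) a.swap = 0 ∧ (E.val.val *ᵥ v) b.swap = 0) := by
  induction k using Nat.strong_induction_on with
  | _ k ih =>
  have main : ∀ (a b : HypIdx n) (v : HypIdx n → ℤ), b ≠ a → b ≠ a.swap →
    (v a).natAbs + (v b).natAbs ≤ k → (v b).natAbs ≤ (v a).natAbs →
    ∃ E ∈ El n, ((E.val.val *ᵥ v) a = 0 ∨ (E.val.val *ᵥ v) b = 0) ∧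
      (∀ c, c ≠ a → c ≠ b → c ≠ a.swap → c ≠ b.swap → (E.val.val *ᵥ v) c = v c) ∧
      (v a.swap = 0 → v b.swap = 0 →
        (E.val.val *ᵥ v) a.swap = 0 ∧ (E.val.val *ᵥ v) b.swap = 0) := by
    intro a b v h1 h2 hk hle
    by_cases hb : v b = 0
    · exact ⟨1, one_mem _, by rw [act_one]; exact ⟨Or.inr hb, fun _ _ _ _ _ => rfl,
        fun h h' => ⟨h, h'⟩⟩⟩
    set w := (T a b (-(v a / v b)) h1).val.val *ᵥ v with hw
    have hwc : ∀ c, w c = v c + (if c = a then -(v a / v b) * v b else 0) -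
      (if c = b.swap then -(v a / v b) * v a.swap else 0) := fun c => T_act a b _ h1 v c
    have e1 : a ≠ b.swap := fun h => h2 (by rw [h, Sum.swap_swap])
    have sa := swap_ne a
    have sb := swap_ne b
    have e4 : a.swap ≠ b.swap := fun h => h1 (by simpa using (congrArg Sum.swap h).symm)
    have wa : w a = v a % v b := by
      rw [hwc, if_pos rfl, if_neg e1]
      have := Int.mul_ediv_add_emod (v a) (v b)
      linarith
    have wb : w b = v b := by
      rw [hwc, if_neg h1, if_neg sb.symm]; ring
    have hlt : (w a).natAbs < (v b).natAbs := by
      rw [wa]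
      have := Int.emod_lt_abs (v a) hb
      have := Int.emod_nonneg (v a) hb
      zify
      rwa [abs_of_nonneg this]
    obtain ⟨E, hE, p1, p2, p3⟩ := ih ((w a).natAbs + (w b).natAbs) (by rw [wb]; omega) a b w h1 h2
      le_rfl
    refine ⟨E * T a b (-(v a / v b)) h1, mul_mem hE (T_mem _ _ _ _ h2), ?_⟩
    rw [act_mul, ← hw]
    refine ⟨p1, ?_, ?_⟩
    · intro c c1 c2 c3 c4
      rw [p2 c c1 c2 c3 c4, hwc, if_neg c1, if_neg c4]; ring
    · intro q1 q2
      apply p3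
      · rw [hwc, if_neg sa, if_neg e4, q1]; ring
      · rw [hwc, q1, q2, if_neg e1.symm]; simp
  intro a b v h1 h2 hk
  rcases le_total (v b).natAbs (v a).natAbs with h | h
  · exact main a b v h1 h2 hk h
  · obtain ⟨E, hE, p1, p2, p3⟩ := main b a v h1.symm (fun h => h2 (by rw [h, Sum.swap_swap]))
      (by omega) h
    exact ⟨E, hE, p1.symm, fun c c1 c2 c3 c4 => p2 c c2 c1 c4 c3, fun q1 q2 => (p3 q2 q1).symm⟩

lemma reduce {n : ℕ} (k : ℕ) : ∀ v : HypIdx n → ℤ, Bf v v = 0 → v ≠ 0 →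
    (Finset.univ.filter (fun c => v c ≠ 0)).card = k →
    ∃ E ∈ El n, ∃ a, ∀ c, c ≠ a → (E.val.val *ᵥ v) c = 0 := by
  induction k using Nat.strong_induction_on with
  | _ k ih =>
  intro v hv hv0 hk
  by_cases hex : ∃ a b, b ≠ a ∧ b ≠ a.swap ∧ v a ≠ 0 ∧ v b ≠ 0 ∧
      ((v a.swap = 0 ∧ v b.swap = 0) ∨ (v a.swap ≠ 0 ∧ v b.swap ≠ 0))
  · obtain ⟨a, b, h1, h2, ha, hb, hab⟩ := hex
    obtain ⟨E, hE, p1, p2, p3⟩ := euclid _ a b v h1 h2 le_rfl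
    set w := E.val.val *ᵥ v with hw
    have hw0 : w ≠ 0 := by
      intro h
      apply hv0
      have : (E⁻¹ * E).val.val *ᵥ v = 0 := by rw [act_mul, ← hw, h]; simp
      rwa [inv_mul_cancel, act_one] at this
    have hsub : ∀ c, w c ≠ 0 → v c ≠ 0 := by
      intro c hc
      by_cases c1 : c = a
      · rwa [c1]
      by_cases c2 : c = b
      · rwa [c2]
      rcases hab with ⟨q1, q2⟩ | ⟨q1, q2⟩
      · obtain ⟨r1, r2⟩ := p3 q1 q2
        have c3 : c ≠ a.swap := fun h => hc (by rw [h, r1])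
        have c4 : c ≠ b.swap := fun h => hc (by rw [h, r2])
        rwa [← p2 c c1 c2 c3 c4]
      · by_cases c3 : c = a.swap
        · rwa [c3]
        by_cases c4 : c = b.swap
        · rwa [c4]
        rwa [← p2 c c1 c2 c3 c4]
    have hlt : (Finset.univ.filter (fun c => w c ≠ 0)).card < k := by
      rw [← hk]
      apply Finset.card_lt_card
      rw [Finset.ssubset_iff_of_subset (fun c hc => by simpa using hsub c (by simpa using hc))]
      rcases p1 with p1 | p1
      · exact ⟨a, by simpa using ha, by simpa using p1⟩
      · exact ⟨b, by simpa using hb, by simpa using p1⟩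
    obtain ⟨F, hF, d, hd⟩ := ih _ hlt w (by rw [hw, Bf_act, hv]) hw0 rfl
    exact ⟨F * E, mul_mem hF hE, d, fun c hc => by rw [act_mul, ← hw]; exact hd c hc⟩
  · push Not at hex
    obtain ⟨a, ha⟩ : ∃ a, v a ≠ 0 := by
      by_contra h; push Not at h; exact hv0 (funext h)
    have key : ∀ a, v a ≠ 0 → v a.swap = 0 := by
      intro a ha
      by_contra hs
      rw [Bf_eq] at hv
      rw [← Finset.sum_subset (Finset.subset_univ {a, a.swap}), Finset.sum_pair (swap_ne a).symm,
        Sum.swap_swap] at hv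
      · have : v a * v a.swap = 0 := by linarith
        rcases mul_eq_zero.mp this with h | h
        · exact ha h
        · exact hs h
      · intro b _ hb
        simp only [Finset.mem_insert, Finset.mem_singleton, not_or] at hb
        by_contra h
        have hb1 := left_ne_zero_of_mul h
        have hb2 := right_ne_zero_of_mul h
        exact hb2 ((hex a b hb.1 hb.2 ha hb1).2 hs)
    refine ⟨1, one_mem _, a, fun c hc => ?_⟩
    rw [act_one]
    by_contra h
    have hca : c ≠ a.swap := fun h' => h (by rw [h', key a ha])
    exact (hex a c hc hca ha h).1 (key a ha) (key c h)

lemma move {n : ℕ} (a b : HypIdx n) (h1 : b ≠ a) (h2 : b ≠ a.swap) (d : ℤ) (hd : d * d = 1) :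
    ∃ E ∈ El n, E.val.val *ᵥ (Pi.single a d) = Pi.single b 1 := by
  have e1 : a ≠ b.swap := fun h => h2 (by rw [h, Sum.swap_swap])
  have sa := swap_ne a
  have sb := swap_ne b
  have e4 : a.swap ≠ b.swap := fun h => h1 (by simpa using (congrArg Sum.swap h).symm)
  refine ⟨T a b (-d) h1 * T b a d h1.symm, mul_mem (T_mem _ _ _ _ h2) (T_mem _ _ _ _ e1), ?_⟩
  rw [act_mul]
  have : (T b a d h1.symm).val.val *ᵥ (Pi.single a d) = Pi.single a d + Pi.single b 1 := by
    ext c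
    rw [T_act]
    simp [Pi.single_apply, e1.symm, hd]
  rw [this]
  ext c
  rw [T_act]
  simp only [Pi.add_apply, Pi.single_apply, if_neg h1, if_neg sa, if_neg h2.symm]
  by_cases hc : c = a
  · simp [hc, h1.symm]
  · simp [hc]

lemma exists_other {n : ℕ} (hn : 2 ≤ n) (a : HypIdx n) : ∃ c : HypIdx n, c ≠ a ∧ c ≠ a.swap := by
  have : Nontrivial (Fin n) := Fin.nontrivial_iff_two_le.mpr hn
  rcases a with a | a <;> obtain ⟨k, h1⟩ := exists_ne a <;> exact ⟨Sum.inl k, by simp [h1]⟩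

lemma move' {n : ℕ} (hn : 2 ≤ n) (a b : HypIdx n) (d : ℤ) (hd : d * d = 1) :
    ∃ E ∈ El n, E.val.val *ᵥ (Pi.single a d) = Pi.single b 1 := by
  by_cases h : b ≠ a ∧ b ≠ a.swap
  · exact move a b h.1 h.2 d hd
  obtain ⟨c, c1, c2⟩ := exists_other hn a
  obtain ⟨E, hE, h1⟩ := move a c c1 c2 d hd
  have hb : b = a ∨ b = a.swap := by tauto
  obtain ⟨F, hF, h2⟩ := move c b (by rcases hb with rfl | rfl; exacts [c1.symm, c2.symm])
    (by
      rcases hb with rfl | rfl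
      · exact fun h => c2 (by rw [h, Sum.swap_swap])
      · exact fun h => c1 (by simpa using (congrArg Sum.swap h).symm)) 1 (by norm_num)
  exact ⟨F * E, mul_mem hF hE, by rw [act_mul, h1, h2]⟩

lemma col_reduce {n : ℕ} (hn : 2 ≤ n) (A : Ogg n) (p : HypIdx n) :
    ∃ E ∈ El n, (E * A).val.val *ᵥ (Pi.single p 1) = Pi.single p 1 := by
  set v := A.val.val *ᵥ (Pi.single p 1) with hv
  have hinv : (A⁻¹).val.val *ᵥ v = Pi.single p 1 := by
    rw [hv, ← act_mul, inv_mul_cancel, act_one]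
  have hv0 : v ≠ 0 := by
    intro h
    rw [h, Matrix.mulVec_zero] at hinv
    have := congrFun hinv p
    simp at this
  have hB : Bf v v = 0 := by
    rw [hv, Bf_act, Bf_single, Pi.single_eq_of_ne (swap_ne p)]
  obtain ⟨E, hE, a, ha⟩ := reduce _ v hB hv0 rfl
  obtain ⟨d, hd⟩ : ∃ d, E.val.val *ᵥ v = Pi.single a d := by
    refine ⟨(E.val.val *ᵥ v) a, ?_⟩
    ext c
    by_cases hc : c = a
    · subst hc; simp
    · simp [hc, ha c hc]
  have hd2 : d * d = 1 := by
    have h1 : (E * A)⁻¹.val.val *ᵥ (Pi.single a d) = Pi.single p 1 := by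
      rw [← hd, hv, ← act_mul E, ← act_mul, inv_mul_cancel, act_one]
    have h2 := congrFun h1 p
    rw [Matrix.mulVec_single] at h2
    simp only [Pi.single_eq_same, Pi.smul_apply, Matrix.col_apply] at h2
    have h3 : IsUnit d := IsUnit.of_mul_eq_one _ (by simpa [mul_comm] using h2)
    rcases Int.isUnit_iff.mp h3 with rfl | rfl <;> norm_num
  obtain ⟨F, hF, h⟩ := move' hn a p d hd2
  exact ⟨F * E, mul_mem hF hE, by rw [act_mul, act_mul, ← hv, hd, h]⟩

lemma col2_reduce {n : ℕ} (p : HypIdx n) (w : HypIdx n → ℤ) (hw : w p.swap = 1)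
    (s : Finset (HypIdx n)) :
    ∃ E ∈ El n, E.val.val *ᵥ (Pi.single p 1) = Pi.single p 1 ∧ (E.val.val *ᵥ w) p.swap = 1 ∧
      ∀ c ∈ s, c ≠ p → c ≠ p.swap → (E.val.val *ᵥ w) c = 0 := by
  induction s using Finset.induction_on with
  | empty => exact ⟨1, one_mem _, act_one _, by rw [act_one]; exact hw, by simp⟩
  | insert c s hc ih =>
    obtain ⟨E, hE, e1, e2, e3⟩ := ih
    by_cases h : c = p ∨ c = p.swap
    · refine ⟨E, hE, e1, e2, fun d hd d1 d2 => ?_⟩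
      rcases Finset.mem_insert.mp hd with rfl | hd
      · tauto
      · exact e3 d hd d1 d2
    · push Not at h
      obtain ⟨h1, h2⟩ := h
      have h3 : p.swap ≠ c.swap := fun h => h1 (by simpa using (congrArg Sum.swap h).symm)
      have h4 : p ≠ c.swap := fun h => h2 (by rw [h, Sum.swap_swap])
      set w' := E.val.val *ᵥ w
      refine ⟨T c p.swap (-(w' c)) h2.symm * E, mul_mem (T_mem _ _ _ _ h3) hE, ?_, ?_, ?_⟩
      · rw [act_mul, e1]
        ext d
        rw [T_act]
        simp [Pi.single_apply, swap_ne, h4.symm]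
      · rw [act_mul, T_act, if_neg h2.symm, Sum.swap_swap, if_neg (swap_ne p)]
        simpa using e2
      · intro d hd d1 d2
        rw [act_mul, T_act, Sum.swap_swap, if_neg d1]
        by_cases hdc : d = c
        · subst hdc
          change w' d + _ - 0 = 0
          have e2' : w' p.swap = 1 := e2
          simp [e2', w']
        · rw [if_neg hdc]
          have := e3 d (Finset.mem_of_mem_insert_of_ne hd hdc) d1 d2
          simpa using this

lemma full_reduce {n : ℕ} (hn : 2 ≤ n) (A : Ogg n) (p : HypIdx n) :
    ∃ E ∈ El n, (E * A).val.val *ᵥ (Pi.single p 1) = Pi.single p 1 ∧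
      (E * A).val.val *ᵥ (Pi.single p.swap 1) = Pi.single p.swap 1 := by
  obtain ⟨E, hE, h1⟩ := col_reduce hn A p
  set w := (E * A).val.val *ᵥ (Pi.single p.swap 1) with hw
  have hw1 : w p.swap = 1 := by
    rw [← Bf_single w p, ← h1, hw, Bf_act, Bf_single]; simp
  obtain ⟨F, hF, f1, f2, f3⟩ := col2_reduce p w hw1 Finset.univ
  refine ⟨F * E, mul_mem hF hE, ?_, ?_⟩
  · rw [mul_assoc, act_mul, h1, f1]
  · rw [mul_assoc, act_mul, ← hw]
    set u := F.val.val *ᵥ w with hu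
    have hB : Bf u u = 0 := by
      rw [hu, Bf_act, hw, Bf_act, Bf_single, Pi.single_eq_of_ne (swap_ne _)]
    have hup : u p = 0 := by
      rw [Bf_eq, ← Finset.sum_subset (Finset.subset_univ {p, p.swap}),
        Finset.sum_pair (swap_ne p).symm, Sum.swap_swap, f2] at hB
      · linarith
      · intro c _ hc
        simp only [Finset.mem_insert, Finset.mem_singleton, not_or] at hc
        rw [f3 c (Finset.mem_univ _) hc.1 hc.2, zero_mul]
    ext c
    by_cases c1 : c = p.swap
    · subst c1; simpa using f2
    · rw [Pi.single_eq_of_ne c1]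
      by_cases c2 : c = p
      · rw [c2, hup]
      · exact f3 c (Finset.mem_univ _) c2 c1

/-- index equivalence -/
def ee (g : ℕ) : HypIdx g ⊕ HypIdx 1 ≃ HypIdx (g + 1) :=
  (Equiv.sumSumSumComm _ _ _ _).trans (Equiv.sumCongr finSumFinEquiv finSumFinEquiv)

lemma ext_sub {g : ℕ} (A : Matrix (HypIdx g) (HypIdx g) ℤ) :
    (extendMat A).submatrix (ee g) (ee g) = Matrix.fromBlocks A 0 0 1 := by
  ext i j
  rcases i with (i | i) | (i | i) <;> rcases j with (j | j) | (j | j) <;>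
    simp [ee, extendMat, Matrix.one_apply, Fin.ext_iff] <;> omega

lemma Q_sub (g : ℕ) :
    (Qmat (g + 1)).submatrix (ee g) (ee g) = Matrix.fromBlocks (Qmat g) 0 0 (Qmat 1) := by
  ext i j
  rcases i with (i | i) | (i | i) <;> rcases j with (j | j) | (j | j) <;>
    simp [ee, Qmat, Matrix.one_apply, Fin.ext_iff] <;> omega

lemma sub_inj {g : ℕ} {A B : Matrix (HypIdx (g + 1)) (HypIdx (g + 1)) ℤ}
    (h : A.submatrix (ee g) (ee g) = B.submatrix (ee g) (ee g)) : A = B :=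
  (Matrix.reindex (ee g).symm (ee g).symm).injective h

lemma ext_form {g : ℕ} (A : Matrix (HypIdx g) (HypIdx g) ℤ) :
    (extendMat A)ᵀ * Qmat (g + 1) * extendMat A = Qmat (g + 1) ↔ Aᵀ * Qmat g * A = Qmat g := by
  have h : ((extendMat A)ᵀ * Qmat (g + 1) * extendMat A).submatrix (ee g) (ee g) =
      Matrix.fromBlocks (Aᵀ * Qmat g * A) 0 0 (Qmat 1) := by
    rw [← Matrix.submatrix_mul_equiv _ _ _ (ee g), ← Matrix.submatrix_mul_equiv _ _ _ (ee g),
      ← Matrix.transpose_submatrix, ext_sub, Q_sub]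
    simp [Matrix.fromBlocks_transpose, Matrix.fromBlocks_multiply]
  constructor
  · intro h'
    rw [h', Q_sub, Matrix.fromBlocks_inj] at h
    exact h.1.symm
  · intro h'
    apply sub_inj
    rw [h, h', Q_sub]

lemma ext_mul {g : ℕ} (A B : Matrix (HypIdx g) (HypIdx g) ℤ) :
    extendMat (A * B) = extendMat A * extendMat B := by
  apply sub_inj
  rw [← Matrix.submatrix_mul_equiv _ _ _ (ee g), ext_sub, ext_sub, ext_sub]
  simp [Matrix.fromBlocks_multiply]

lemma ext_one {g : ℕ} : extendMat (1 : Matrix (HypIdx g) (HypIdx g) ℤ) = 1 := by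
  apply sub_inj
  rw [ext_sub]; simp

/-- stabilisation -/
def stab (g : ℕ) : Ogg g →* Ogg (g + 1) where
  toFun A := mkO (extendMat A.val.val) ((ext_form _).2 (O_form A))
  map_one' := O_ext (by simp [ext_one])
  map_mul' A B := O_ext (by simp [ext_mul])

@[simp] lemma stab_val {g : ℕ} (A : Ogg g) : (stab g A).val.val = extendMat A.val.val := rfl

lemma mem_range_stab {g : ℕ} (A : Ogg (g + 1))
    (h1 : A.val.val *ᵥ (Pi.single (Sum.inl (Fin.last g)) 1) = Pi.single (Sum.inl (Fin.last g)) 1)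
    (h2 : A.val.val *ᵥ (Pi.single (Sum.inr (Fin.last g)) 1) = Pi.single (Sum.inr (Fin.last g)) 1) :
    ∃ A', stab g A' = A := by
  have c1 : ∀ c, A.val.val c (Sum.inl (Fin.last g)) =
      (Pi.single (Sum.inl (Fin.last g)) 1 : HypIdx (g + 1) → ℤ) c := fun c => by
    rw [← h1]; simp
  have c2 : ∀ c, A.val.val c (Sum.inr (Fin.last g)) =
      (Pi.single (Sum.inr (Fin.last g)) 1 : HypIdx (g + 1) → ℤ) c := fun c => by
    rw [← h2]; simp
  have r1 : ∀ c, A.val.val (Sum.inr (Fin.last g)) c =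
      (Pi.single c 1 : HypIdx (g + 1) → ℤ) (Sum.inr (Fin.last g)) := fun c => by
    have := Bf_act A (Pi.single c 1) (Pi.single (Sum.inl (Fin.last g)) 1)
    rw [h1, Bf_single, Bf_single] at this
    simpa using this
  have r2 : ∀ c, A.val.val (Sum.inl (Fin.last g)) c =
      (Pi.single c 1 : HypIdx (g + 1) → ℤ) (Sum.inl (Fin.last g)) := fun c => by
    have := Bf_act A (Pi.single c 1) (Pi.single (Sum.inr (Fin.last g)) 1)
    rw [h2, Bf_single, Bf_single] at this
    simpa using this
  have key : extendMat (A.val.val.submatrix (fun i => ee g (Sum.inl i)) (fun i => ee g (Sum.inl i)))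
      = A.val.val := by
    apply sub_inj
    rw [ext_sub]
    have l : ∀ i : Fin 1, Fin.natAdd g i = Fin.last g := fun i => by
      ext; simp
    ext i j
    rcases i with i | (i | i) <;> rcases j with j | (j | j) <;>
      simp [ee, c1, c2, r1, r2, l, Pi.single_apply, Matrix.one_apply]
    all_goals first
      | omega
      | (rcases i with i | i <;> simp [Fin.ext_iff] <;> omega)
      | (rcases j with j | j <;> simp [Fin.ext_iff] <;> omega)
  have hf := O_form A
  rw [← key] at hf
  exact ⟨mkO _ ((ext_form _).1 hf), O_ext key⟩

lemma decomp {g : ℕ} (hg : 1 ≤ g) (A : Ogg (g + 1)) :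
    ∃ E ∈ El (g + 1), ∃ A', A = E * stab g A' := by
  obtain ⟨E, hE, h1, h2⟩ := full_reduce (by omega) A (Sum.inl (Fin.last g))
  obtain ⟨A', hA'⟩ := mem_range_stab (E * A) h1 h2
  exact ⟨E⁻¹, inv_mem hE, A', by rw [hA']; group⟩

/-- lift of indices -/
def lift {g : ℕ} (a : HypIdx g) : HypIdx (g + 1) := ee g (Sum.inl a)

lemma lift_swap {g : ℕ} (a : HypIdx g) : lift a.swap = (lift a).swap := by
  rcases a with a | a <;> simp [lift, ee]

lemma lift_inj {g : ℕ} {a b : HypIdx g} : lift a = lift b ↔ a = b := by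
  simp [lift]

lemma ext_Tm {g : ℕ} (a b : HypIdx g) (t : ℤ) :
    extendMat (Tm a b t) = Tm (lift a) (lift b) t := by
  apply sub_inj
  rw [ext_sub]
  ext i j
  simp only [Tm, ← lift_swap]
  rcases i with i | i <;> rcases j with j | j <;>
    simp [lift, Matrix.single_apply, Matrix.one_apply]

lemma stab_El {g : ℕ} (A : Ogg g) (hA : A ∈ El g) : stab g A ∈ El (g + 1) := by
  have : El g ≤ (El (g + 1)).comap (stab g) := by
    rw [El, Subgroup.closure_le]
    rintro X ⟨a, b, t, h1, h2, rfl⟩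
    have h : stab g (T a b t h1) = T (lift a) (lift b) t (by rwa [Ne, lift_inj]) :=
      O_ext (ext_Tm a b t)
    change stab g (T a b t h1) ∈ El (g + 1)
    rw [h]
    apply T_mem
    rwa [← lift_swap, Ne, lift_inj]
  exact this hA

/-- projections to the definite parts -/
def Pm (n : ℕ) : Matrix (Fin n) (HypIdx n) ℝ := Matrix.fromCols 1 1
def Rm (n : ℕ) : Matrix (Fin n) (HypIdx n) ℝ := Matrix.fromCols 1 (-1)

def toR {n : ℕ} (A : Ogg n) : Matrix (HypIdx n) (HypIdx n) ℝ := A.val.val.map (Int.cast : ℤ → ℝ)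

lemma toR_mul {n : ℕ} (A B : Ogg n) : toR (A * B) = toR A * toR B := by
  have := Matrix.map_mul (L := A.val.val) (M := B.val.val) (f := Int.castRingHom ℝ)
  simpa [toR] using this

lemma toR_one {n : ℕ} : toR (1 : Ogg n) = 1 := by
  simp [toR]

lemma PPt (n : ℕ) : Pm n * (Pm n)ᵀ = 2 := by
  simp only [Pm, Matrix.transpose_fromCols, Matrix.fromCols_mul_fromRows]
  simp; norm_num

lemma PRt (n : ℕ) : Pm n * (Rm n)ᵀ = 0 := by
  simp only [Pm, Rm, Matrix.transpose_fromCols, Matrix.fromCols_mul_fromRows]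
  simp

lemma RPt (n : ℕ) : Rm n * (Pm n)ᵀ = 0 := by
  simp only [Pm, Rm, Matrix.transpose_fromCols, Matrix.fromCols_mul_fromRows]
  simp

lemma RRt (n : ℕ) : Rm n * (Rm n)ᵀ = 2 := by
  simp only [Rm, Matrix.transpose_fromCols, Matrix.fromCols_mul_fromRows]
  simp; norm_num

lemma sum_id (n : ℕ) : (Pm n)ᵀ * Pm n + (Rm n)ᵀ * Rm n = 2 := by
  ext i j
  rcases i with i | i <;> rcases j with j | j <;>
    simp [Pm, Rm, Matrix.transpose_fromCols, Matrix.fromRows_mul_fromCols, Matrix.ofNat_apply,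
      Matrix.one_apply] <;> split_ifs <;> norm_num

/-- real Gram matrix -/
def QR (n : ℕ) : Matrix (HypIdx n) (HypIdx n) ℝ := (Qmat n).map (Int.cast : ℤ → ℝ)

lemma diff_id (n : ℕ) : (Pm n)ᵀ * Pm n - (Rm n)ᵀ * Rm n = (2 : ℝ) • QR n := by
  ext i j
  rcases i with i | i <;> rcases j with j | j <;>
    simp [Pm, Rm, QR, Qmat, Matrix.transpose_fromCols, Matrix.fromRows_mul_fromCols,
      Matrix.one_apply] <;> split_ifs <;> norm_num

lemma toR_form {n : ℕ} (A : Ogg n) : (toR A)ᵀ * QR n * toR A = QR n := by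
  have := congrArg (fun M => Matrix.map M (Int.castRingHom ℝ)) (O_form A)
  simp only [Matrix.map_mul] at this
  exact this

def Nf {n : ℕ} (v : HypIdx n → ℝ) : ℝ :=
  (Pm n *ᵥ v) ⬝ᵥ (Pm n *ᵥ v) - (Rm n *ᵥ v) ⬝ᵥ (Rm n *ᵥ v)

lemma Nf_eq {n : ℕ} (v : HypIdx n → ℝ) : Nf v = 2 * (v ⬝ᵥ (QR n *ᵥ v)) := by
  have h := congrArg (fun M => v ⬝ᵥ (M *ᵥ v)) (diff_id n)
  simp only [Matrix.sub_mulVec, dotProduct_sub, ← Matrix.mulVec_mulVec, Matrix.smul_mulVec,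
    dotProduct_smul, smul_eq_mul] at h
  rw [← h, Nf, Matrix.dotProduct_mulVec v, Matrix.dotProduct_mulVec v, Matrix.vecMul_transpose,
    Matrix.vecMul_transpose]

lemma Nf_act {n : ℕ} (A : Ogg n) (v : HypIdx n → ℝ) : Nf (toR A *ᵥ v) = Nf v := by
  rw [Nf_eq, Nf_eq]
  conv_rhs => rw [← toR_form A]
  rw [← Matrix.mulVec_mulVec, ← Matrix.mulVec_mulVec, Matrix.dotProduct_mulVec v,
    Matrix.vecMul_transpose]

def Mt {n : ℕ} (A B : Ogg n) (t : ℝ) : Matrix (Fin n) (Fin n) ℝ :=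
  Pm n * toR A * ((Pm n)ᵀ * Pm n + t • ((Rm n)ᵀ * Rm n)) * toR B * (Pm n)ᵀ

lemma Mt_det_ne {n : ℕ} (A B : Ogg n) (t : ℝ) (h0 : 0 ≤ t) (h1 : t ≤ 1) : (Mt A B t).det ≠ 0 := by
  intro hdet
  obtain ⟨x, hx, hM⟩ := Matrix.exists_mulVec_eq_zero_iff.mpr hdet
  set u := toR B *ᵥ ((Pm n)ᵀ *ᵥ x) with hu
  set w := ((Pm n)ᵀ * Pm n + t • ((Rm n)ᵀ * Rm n)) *ᵥ u with hw
  have hPA : Pm n *ᵥ (toR A *ᵥ w) = 0 := by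
    rw [← hM, Mt, hw, hu]
    simp only [Matrix.mulVec_mulVec, Matrix.mul_assoc]
  have two : ∀ y : Fin n → ℝ, (2 : Matrix (Fin n) (Fin n) ℝ) *ᵥ y = (2 : ℝ) • y := by
    intro y
    rw [← one_add_one_eq_two, Matrix.add_mulVec, Matrix.one_mulVec, two_smul]
  have hPw : Pm n *ᵥ w = (2 : ℝ) • (Pm n *ᵥ u) := by
    rw [hw, Matrix.mulVec_mulVec, Matrix.mul_add, ← Matrix.mul_assoc, PPt, Matrix.mul_smul,
      ← Matrix.mul_assoc, PRt, Matrix.zero_mul, smul_zero, add_zero, ← Matrix.mulVec_mulVec, two]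
  have hRw : Rm n *ᵥ w = (2 * t) • (Rm n *ᵥ u) := by
    rw [hw, Matrix.mulVec_mulVec, Matrix.mul_add, ← Matrix.mul_assoc, RPt, Matrix.mul_smul,
      ← Matrix.mul_assoc, RRt, Matrix.zero_mul, zero_add, Matrix.smul_mulVec,
      ← Matrix.mulVec_mulVec, two, smul_smul, mul_comm]
  have e1 : Nf u = 4 * (x ⬝ᵥ x) := by
    rw [hu, Nf_act, Nf, Matrix.mulVec_mulVec, Matrix.mulVec_mulVec, PPt, RPt, two]
    simp; ring
  have e2 := Nf_act A w
  rw [Nf, Nf, hPA, hPw, hRw] at e2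
  simp only [dotProduct_smul, smul_dotProduct, smul_eq_mul, dotProduct_zero] at e2
  rw [Nf] at e1
  have p : ∀ {m : ℕ} (y : Fin m → ℝ), 0 ≤ y ⬝ᵥ y := fun y =>
    Finset.sum_nonneg fun i _ => mul_self_nonneg _
  have hxx : 0 < x ⬝ᵥ x := lt_of_le_of_ne (p x) (fun h => hx (dotProduct_self_eq_zero.mp h.symm))
  have p1 := p (Rm n *ᵥ toR A *ᵥ w)
  have p2 := p (Rm n *ᵥ u)
  have p3 : t * t ≤ 1 := by nlinarith
  nlinarith [mul_le_mul_of_nonneg_right p3 p2]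

/-- spinor sign -/
noncomputable def sgn {n : ℕ} (A : Ogg n) : SignType :=
  SignType.sign (Pm n * toR A * (Pm n)ᵀ).det

lemma sign_const (f : ℝ → ℝ) (hf : Continuous f) (h : ∀ t, 0 ≤ t → t ≤ 1 → f t ≠ 0) :
    SignType.sign (f 0) = SignType.sign (f 1) := by
  have h0 := h 0 le_rfl zero_le_one
  have h1 := h 1 zero_le_one le_rfl
  rcases lt_or_gt_of_ne h0 with a | a <;> rcases lt_or_gt_of_ne h1 with b | b
  · rw [sign_neg a, sign_neg b]
  · obtain ⟨t, ht, ht0⟩ := intermediate_value_Icc zero_le_one hf.continuousOn ⟨a.le, b.le⟩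
    exact absurd ht0 (h t ht.1 ht.2)
  · obtain ⟨t, ht, ht0⟩ := intermediate_value_Icc' zero_le_one hf.continuousOn ⟨b.le, a.le⟩
    exact absurd ht0 (h t ht.1 ht.2)
  · rw [sign_pos a, sign_pos b]

lemma two_eq (n : ℕ) {m : Type} [Fintype m] [DecidableEq m] :
    (2 : Matrix m m ℝ) = (2 : ℝ) • 1 := by
  rw [two_smul, one_add_one_eq_two]

lemma sgn_one {n : ℕ} : sgn (1 : Ogg n) = 1 := by
  rw [sgn, toR_one, Matrix.mul_one, PPt, two_eq n, Matrix.det_smul, Matrix.det_one]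
  exact sign_pos (by positivity)

lemma sgn_mul {n : ℕ} (A B : Ogg n) : sgn (A * B) = sgn A * sgn B := by
  have hc : Continuous (fun t => (Mt A B t).det) := by
    apply Continuous.matrix_det
    unfold Mt
    fun_prop
  have h := sign_const _ hc (fun t h0 h1 => Mt_det_ne A B t h0 h1)
  have h0 : (Mt A B 0).det = (Pm n * toR A * (Pm n)ᵀ).det * (Pm n * toR B * (Pm n)ᵀ).det := by
    rw [← Matrix.det_mul, Mt, zero_smul, add_zero]
    simp only [Matrix.mul_assoc]
  have h1 : (Mt A B 1).det = 2 ^ n * (Pm n * toR (A * B) * (Pm n)ᵀ).det := by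
    rw [Mt, one_smul, sum_id, two_eq n, Matrix.mul_smul, Matrix.mul_one, Matrix.smul_mul,
      Matrix.smul_mul, Matrix.det_smul, toR_mul, Matrix.mul_assoc (Pm n) (toR A)]
    simp
  simp only [h0, h1, sign_mul] at h
  rw [sgn, sgn, sgn, h, sign_pos (by positivity : (0 : ℝ) < 2 ^ n), one_mul]

lemma S_apply {n : ℕ} (A : Ogg n) (i j : Fin n) : (Pm n * toR A * (Pm n)ᵀ) i j =
    ((A.val.val (Sum.inl i) (Sum.inl j) + A.val.val (Sum.inl i) (Sum.inr j) +
      A.val.val (Sum.inr i) (Sum.inl j) + A.val.val (Sum.inr i) (Sum.inr j) : ℤ) : ℝ) := by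
  simp [Matrix.mul_apply, Pm, toR, Matrix.one_apply, Fintype.sum_sum_type, Matrix.fromCols]
  ring

lemma sgn_stab {n : ℕ} (A : Ogg n) : sgn (stab n A) = sgn A := by
  have h : (Pm (n + 1) * toR (stab n A) * (Pm (n + 1))ᵀ).submatrix finSumFinEquiv finSumFinEquiv =
      Matrix.fromBlocks (Pm n * toR A * (Pm n)ᵀ) 0 0 ((2 : ℝ) • (1 : Matrix (Fin 1) (Fin 1) ℝ)) := by
    ext i j
    rcases i with i | i <;> rcases j with j | j <;>
      simp [S_apply, extendMat, Fin.ext_iff, Matrix.one_apply]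
    all_goals first | omega | norm_num
  rw [sgn, ← Matrix.det_submatrix_equiv_self finSumFinEquiv, h, Matrix.det_fromBlocks_zero₂₁]
  simp [sign_mul, sgn]

noncomputable def chi (n : ℕ) : Ogg n →* ℤˣ × SignTypeˣ :=
  ((Matrix.GeneralLinearGroup.det).comp (Ogg n).subtype).prod
    (MonoidHom.toHomUnits
      { toFun := sgn, map_one' := sgn_one, map_mul' := sgn_mul : Ogg n →* SignType })

lemma chi_eq_iff {n m : ℕ} (A : Ogg n) (B : Ogg m) :
    chi n A = chi m B ↔ A.val.val.det = B.val.val.det ∧ sgn A = sgn B := by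
  simp [chi, Prod.ext_iff, Units.ext_iff]

lemma chi_stab {n : ℕ} (A : Ogg n) : chi (n + 1) (stab n A) = chi n A := by
  rw [chi_eq_iff]
  refine ⟨?_, sgn_stab A⟩
  rw [stab_val, ← Matrix.det_submatrix_equiv_self (ee n), ext_sub, Matrix.det_fromBlocks_zero₂₁]
  simp

lemma chi_El {n : ℕ} (hn : 2 ≤ n) (E : Ogg n) (hE : E ∈ El n) : chi n E = 1 := by
  rw [← chi_stab]
  exact Abelianization.commutator_subset_ker _ (El_le_comm (by omega) (stab_El E hE))

lemma base (A : Ogg 1) (h : chi 1 A = 1) : A = 1 := by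
  rw [← map_one (chi 1), chi_eq_iff, sgn_one] at h
  obtain ⟨h1, h2⟩ := h
  rw [sgn, sign_eq_one_iff, Matrix.det_fin_one, S_apply, Int.cast_pos] at h2
  rw [← Matrix.det_submatrix_equiv_self (finSumFinEquiv (m := 1) (n := 1)).symm] at h1
  have q0 : (finSumFinEquiv (m := 1) (n := 1)).symm 0 = Sum.inl 0 := by decide
  have q1 : (finSumFinEquiv (m := 1) (n := 1)).symm 1 = Sum.inr 0 := by decide
  have h1' := (Matrix.det_fin_two _).symm.trans h1
  simp only [Matrix.submatrix_apply, q0, q1] at h1'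
  have f := O_form A
  have f1 := congrFun (congrFun f (Sum.inl 0)) (Sum.inl 0)
  have f2 := congrFun (congrFun f (Sum.inr 0)) (Sum.inr 0)
  have f3 := congrFun (congrFun f (Sum.inl 0)) (Sum.inr 0)
  simp [Matrix.mul_apply, Q_apply] at f1 f2 f3
  have hone : ((1 : Ogg 1).val.val).det = 1 := by simp
  rw [hone] at h1'
  suffices hs : A.val.val (Sum.inl 0) (Sum.inl 0) = 1 ∧ A.val.val (Sum.inl 0) (Sum.inr 0) = 0 ∧
      A.val.val (Sum.inr 0) (Sum.inl 0) = 0 ∧ A.val.val (Sum.inr 0) (Sum.inr 0) = 1 by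
    obtain ⟨s1, s2, s3, s4⟩ := hs
    apply O_ext
    ext i j
    rcases i with i | i <;> rcases j with j | j <;> rw [Subsingleton.elim i 0,
      Subsingleton.elim j 0] <;> simp [s1, s2, s3, s4]
  generalize A.val.val (Sum.inl 0) (Sum.inl 0) = a at *
  generalize A.val.val (Sum.inl 0) (Sum.inr 0) = b at *
  generalize A.val.val (Sum.inr 0) (Sum.inl 0) = c at *
  generalize A.val.val (Sum.inr 0) (Sum.inr 0) = d at *
  have had : a * d = 1 := by linarith
  have hac : a * c = 0 := by linarith
  have hbd : b * d = 0 := by linarith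
  rcases Int.eq_one_or_neg_one_of_mul_eq_one' had with ⟨rfl, rfl⟩ | ⟨rfl, rfl⟩ <;>
    refine ⟨?_, ?_, ?_, ?_⟩ <;> omega

lemma ker_chi {n : ℕ} (hn : 1 ≤ n) : ∀ A : Ogg n, chi n A = 1 → A ∈ El n := by
  induction n, hn using Nat.le_induction with
  | base => intro A hA; rw [base A hA]; exact one_mem _
  | succ n hn ih =>
    intro A hA
    obtain ⟨E, hE, A', rfl⟩ := decomp hn A
    rw [map_mul, chi_El (by omega) E hE, one_mul, chi_stab] at hA
    exact mul_mem hE (stab_El _ (ih A' hA))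

lemma bij {g : ℕ} (hg : 3 ≤ g) : Function.Bijective (Abelianization.map (stab g)) := by
  constructor
  · rw [injective_iff_map_eq_one]
    intro x hx
    induction x using QuotientGroup.induction_on with
    | H A =>
    change Abelianization.of (stab g A) = 1 at hx
    change Abelianization.of A = 1
    rw [← MonoidHom.mem_ker, Abelianization.ker_of] at hx ⊢
    have h := Abelianization.commutator_subset_ker (chi (g + 1)) hx
    rw [MonoidHom.mem_ker, chi_stab] at h
    exact El_le_comm hg (ker_chi (by omega) A h)
  · intro x
    induction x using QuotientGroup.induction_on with
    | H A =>
    obtain ⟨E, hE, A', rfl⟩ := decomp (by omega) A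
    refine ⟨Abelianization.of A', ?_⟩
    change Abelianization.of (stab g A') = Abelianization.of (E * stab g A')
    have : Abelianization.of E = 1 := by
      rw [← MonoidHom.mem_ker, Abelianization.ker_of]
      exact El_le_comm (by omega) hE
    rw [map_mul, this, one_mul]

end OggAux

/-- For every `g ≥ 5`, the block-inclusion homomorphism `O_{g,g}(ℤ) → O_{g+1,g+1}(ℤ)`,
extending a matrix by the identity on one additional hyperbolic plane, induces an
isomorphism on abelianisations. -/
theorem Ogg_stabilization_abelianization (g : ℕ) (hg : 5 ≤ g) :
    ∃ φ : ↥(Ogg g) →* ↥(Ogg (g + 1)),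
      (∀ A : ↥(Ogg g), (φ A).val.val = extendMat A.val.val) ∧
      Function.Bijective (Abelianization.map φ) := by
  exact ⟨OggAux.stab g, fun _ => rfl, OggAux.bij (by omega)⟩
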